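/- arXiv:1208.0973 — 2 statements merged into one kernel-verified Lean document; each statement's English description precedes it below -/
import Mathlib

section
/- Let a < b be real numbers. For a subset S of the closed interval [a,b] of ℝ, the following are equivalent: (i) S is inductive; (ii) S = [a,b]. -/
/-!
If an inductive set `S` misses a point of `[a, b]`, let `m` be the infimum of `[a, b] \ S`. Then
`[a, m) ⊆ S`, so `m ∈ S`, hence `m < b` and `[m, y] ⊆ S` for some `y > m`. This `y` is a lower
bound of `[a, b] \ S` greater than its infimum.
-/

section Inductive

open Set

variable {α : Type*}

/-- Inductive subsets `S` of an interval `[a, b]`: `a ∈ S`, membership propagates to the right of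
each point of `S` before `b`, and `S` contains every `x` such that `[a, x) ⊆ S`. The inclusion
`S ⊆ [a, b]` is not part of the definition. -/
def IsInductiveOn [Preorder α] (a b : α) (S : Set α) : Prop :=
  a ∈ S ∧
  (∀ x, a ≤ x → x < b → x ∈ S → ∃ y, x < y ∧ Icc x y ⊆ S) ∧
  (∀ x, a < x → x ≤ b → Ico a x ⊆ S → x ∈ S)

theorem isInductiveOn_Icc [Preorder α] {a b : α} (hab : a ≤ b) : IsInductiveOn a b (Icc a b) :=
  ⟨left_mem_Icc.2 hab,
    fun _ hax hxb _ => ⟨b, hxb, Icc_subset_Icc_left hax⟩,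
    fun _ hax hxb _ => ⟨hax.le, hxb⟩⟩

theorem Ico_subset_of_mem_lowerBounds_Icc_diff [Preorder α] {a b m : α} {S : Set α}
    (hm : m ∈ lowerBounds (Icc a b \ S)) (hmb : m ≤ b) : Ico a m ⊆ S := by
  intro t ht
  by_contra htS
  exact ht.2.not_ge (hm ⟨⟨ht.1, ht.2.le.trans hmb⟩, htS⟩)

theorem mem_lowerBounds_diff_of_Icc_subset [LinearOrder α] {m y : α} {S T : Set α}
    (hm : m ∈ lowerBounds (T \ S)) (hmy : Icc m y ⊆ S) : y ∈ lowerBounds (T \ S) := by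
  intro t ht
  by_contra! hty
  exact ht.2 (hmy ⟨hm ht, hty.le⟩)

namespace IsInductiveOn

theorem mem_of_Ico_subset [PartialOrder α] {a b x : α} {S : Set α} (hS : IsInductiveOn a b S)
    (hx : x ∈ Icc a b) (hsub : Ico a x ⊆ S) : x ∈ S := by
  obtain ⟨haS, -, hlim⟩ := hS
  obtain rfl | hax := hx.1.eq_or_lt
  · exact haS
  · exact hlim x hax hx.2 hsub

theorem Icc_subset [ConditionallyCompleteLinearOrder α] {a b : α} {S : Set α}
    (hS : IsInductiveOn a b S) : Icc a b ⊆ S := by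
  intro z hz
  by_contra hzS
  have ha : a ∈ lowerBounds (Icc a b \ S) := fun _ ht => ht.1.1
  obtain ⟨m, hm⟩ : ∃ m, IsGLB (Icc a b \ S) m := ⟨_, isGLB_csInf ⟨z, hz, hzS⟩ ⟨a, ha⟩⟩
  have ham : a ≤ m := hm.2 ha
  have hmz : m ≤ z := hm.1 ⟨hz, hzS⟩
  have hmb : m ≤ b := hmz.trans hz.2
  have hmS : m ∈ S :=
    hS.mem_of_Ico_subset ⟨ham, hmb⟩ (Ico_subset_of_mem_lowerBounds_Icc_diff hm.1 hmb)
  have hmb' : m < b := (hmz.lt_of_ne (ne_of_mem_of_not_mem hmS hzS)).trans_le hz.2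
  obtain ⟨y, hmy, hyS⟩ := hS.2.1 m ham hmb' hmS
  exact hmy.not_ge (hm.2 (mem_lowerBounds_diff_of_Icc_subset hm.1 hyS))

end IsInductiveOn

theorem real_induction_general [ConditionallyCompleteLinearOrder α] {a b : α} (hab : a ≤ b)
    {S : Set α} (hS : S ⊆ Icc a b) : IsInductiveOn a b S ↔ S = Icc a b := by
  constructor
  · intro hind
    exact hS.antisymm hind.Icc_subset
  · rintro rfl
    exact isInductiveOn_Icc hab

end Inductive

/-- Real Induction: a subset `S` of `[a,b]` is inductive iff `S = [a,b]`. -/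
theorem real_induction (a b : ℝ) (hab : a < b) (S : Set ℝ) (hS : S ⊆ Set.Icc a b) :
    (a ∈ S ∧
     (∀ x : ℝ, a ≤ x → x < b → x ∈ S → ∃ y : ℝ, x < y ∧ Set.Icc x y ⊆ S) ∧
     (∀ x : ℝ, a < x → x ≤ b → Set.Ico a x ⊆ S → x ∈ S)) ↔
    S = Set.Icc a b :=
  real_induction_general hab.le hS
end

section
/- For a linearly ordered set X, the following are equivalent: (i) X is Dedekind complete; (ii) the only inductive subset of X is X itself. -/
/-!
The complement of a proper inductive set is nonempty and bounded below but has no greatest lower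
bound: such a bound would lie in the set by (IS3), and (IS2) would then let one move past it.
Conversely, if `T` is nonempty, bounded above and has no least upper bound, then the points that
are not upper bounds of `T` form a proper inductive set.
-/

open Set

section Preorder

variable {X : Type*} [Preorder X] {T : Set X} {t : X}

/-- Inductive subsets of an order, the sets to which order-theoretic induction applies; the three
fields are (IS1), (IS2) and (IS3). -/
structure IsInductive (S : Set X) : Prop where
  exists_Iic_subset : ∃ a, Iic a ⊆ S
  isTop_or_exists_Icc_subset : ∀ x ∈ S, IsTop x ∨ ∃ y, x < y ∧ Icc x y ⊆ S
  mem_of_Iio_subset : ∀ x, Iio x ⊆ S → x ∈ S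

theorem Iic_subset_compl_upperBounds (ht : t ∈ T) (hlub : ¬IsLUB T t) :
    Iic t ⊆ (upperBounds T)ᶜ := by
  intro x hxt hx
  have t_greatest : IsGreatest T t := ⟨ht, fun _ hs => (hx hs).trans hxt⟩
  exact hlub t_greatest.isLUB

end Preorder

section LinearOrder

variable {X : Type*} [LinearOrder X] {S T : Set X} {u : X}

theorem IsInductive.bddBelow_compl (hS : IsInductive S) : BddBelow Sᶜ := by
  obtain ⟨a, ha⟩ := hS.exists_Iic_subset
  exact ⟨a, fun x hx => le_of_not_ge fun hxa => hx (ha hxa)⟩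

theorem IsInductive.eq_univ_of_isGLB_compl (hS : IsInductive S) (hu : IsGLB Sᶜ u) : S = univ := by
  have Iio_subset : Iio u ⊆ S := fun z hz => by_contra fun hzS => (hu.1 hzS).not_gt hz
  have u_mem : u ∈ S := hS.mem_of_Iio_subset u Iio_subset
  rcases hS.isTop_or_exists_Icc_subset u u_mem with u_top | ⟨y, huy, Icc_subset⟩
  · refine eq_univ_of_forall fun x => ?_
    rcases (u_top x).lt_or_eq with hxu | rfl
    · exact Iio_subset hxu
    · exact u_mem
  · obtain ⟨x, hxS, hux, hxy⟩ := hu.exists_between huy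
    exact absurd (Icc_subset ⟨hux, hxy.le⟩) hxS

theorem isInductive_compl_upperBounds (hT : T.Nonempty) (hlub : ∀ u, ¬IsLUB T u) :
    IsInductive (upperBounds T)ᶜ where
  exists_Iic_subset := hT.imp fun t ht => Iic_subset_compl_upperBounds ht (hlub t)
  isTop_or_exists_Icc_subset x hx := by
    obtain ⟨t, ht, hxt⟩ : ∃ t ∈ T, x < t := by
      simpa only [mem_compl_iff, mem_upperBounds, not_forall, not_le, exists_prop] using hx
    exact Or.inr ⟨t, hxt, Icc_subset_Iic_self.trans (Iic_subset_compl_upperBounds ht (hlub t))⟩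
  mem_of_Iio_subset x hx hxT :=
    hlub x ⟨hxT, fun _ hc => le_of_not_gt fun hcx => hx hcx hc⟩

end LinearOrder

/-- A linearly ordered set is Dedekind complete iff its only inductive subset is the
whole set. A subset `S` is inductive if: (IS1) some `a` has `(-∞, a] ⊆ S`; (IS2) every
`x ∈ S` is either the top element or admits `y > x` with `[x,y] ⊆ S`; (IS3) if all
`z < x` lie in `S` then `x ∈ S`. -/
theorem linearly_ordered_induction {X : Type*} [LinearOrder X] :
    (∀ S : Set X, S.Nonempty → BddAbove S → ∃ u : X, IsLUB S u) ↔
    (∀ S : Set X,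
      (∃ a : X, ∀ x : X, x ≤ a → x ∈ S) →
      (∀ x ∈ S, (∀ z : X, z ≤ x) ∨ ∃ y : X, x < y ∧ Set.Icc x y ⊆ S) →
      (∀ x : X, (∀ z : X, z < x → z ∈ S) → x ∈ S) →
      S = Set.univ) := by
  constructor
  · intro complete S initial succ limit
    have hS : IsInductive S := ⟨initial, succ, limit⟩
    by_contra hne
    have compl_nonempty : Sᶜ.Nonempty := nonempty_compl.2 hne
    obtain ⟨u, hu⟩ := complete (lowerBounds Sᶜ) hS.bddBelow_compl
      compl_nonempty.bddAbove_lowerBounds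
    exact hne (hS.eq_univ_of_isGLB_compl (isLUB_lowerBounds.1 hu))
  · intro induction_principle T hT hbdd
    by_contra! hlub
    obtain ⟨initial, succ, limit⟩ := isInductive_compl_upperBounds hT hlub
    have no_upperBounds : upperBounds T = ∅ :=
      compl_univ_iff.1 (induction_principle _ initial succ limit)
    exact hbdd.ne_empty no_upperBounds
end
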